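/- Let Ω be a finite set, f : 2^Ω → ℝ a monotone submodular set function, k ≥ 1 an integer, and S* ⊆ Ω with |S*| ≤ k. Let S ⊊ Ω, let ε ≥ 0, and let x̄ : Ω \ S → ℝ satisfy |x̄(a) − f(S ∪ {a})| ≤ ε for every a ∈ Ω \ S. If a₁ ∈ Ω \ S maximizes x̄ over Ω \ S, then f(S ∪ {a₁}) − f(S) ≥ (1/k)·( f(S*) − f(S) ) − 2ε. -/

import Mathlib

open Finset

/-!
Write `T` for `S*`. Adding the elements of `T \ S` to `S` one at a time, diminishing returns bound
each increment by the marginal value of that element over `S` itself. Monotonicity then gives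
`f T - f S ≤ ∑ a ∈ T \ S, (f (insert a S) - f S)`, and a maximizer of an `ε`-accurate estimate loses
at most `2ε` against each of the at most `k` summands.
-/

section Submodular

variable {α R : Type*} [DecidableEq α] [AddCommGroup R] [PartialOrder R]

/-- Submodularity of a set function on finite sets, in the form of diminishing returns: the marginal
value of an element decreases as the set to which it is added grows. -/
def IsSubmodular (f : Finset α → R) : Prop :=
  ∀ ⦃A B : Finset α⦄, A ⊆ B → ∀ ⦃x : α⦄, x ∉ B → f (insert x B) - f B ≤ f (insert x A) - f A

namespace IsSubmodular

variable [IsOrderedAddMonoid R] {f : Finset α → R}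

theorem union_sub_le_sum (hf : IsSubmodular f) {S T : Finset α} (hST : Disjoint S T) :
    f (S ∪ T) - f S ≤ ∑ a ∈ T, (f (insert a S) - f S) := by
  induction T using Finset.induction_on with
  | empty => simp
  | insert x T hxT ih =>
    obtain ⟨hxS, hST⟩ := disjoint_insert_right.mp hST
    have hx : x ∉ S ∪ T := notMem_union.mpr ⟨hxS, hxT⟩
    calc
      f (S ∪ insert x T) - f S
          = (f (insert x (S ∪ T)) - f (S ∪ T)) + (f (S ∪ T) - f S) := by
        rw [union_insert, sub_add_sub_cancel]
      _ ≤ (f (insert x S) - f S) + ∑ a ∈ T, (f (insert a S) - f S) :=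
        add_le_add (hf subset_union_left hx) (ih hST)
      _ = ∑ a ∈ insert x T, (f (insert a S) - f S) := by rw [sum_insert hxT]

theorem sub_le_sum_sdiff (hf : IsSubmodular f) (hmono : Monotone f) (S T : Finset α) :
    f T - f S ≤ ∑ a ∈ T \ S, (f (insert a S) - f S) :=
  calc
    f T - f S ≤ f (S ∪ T) - f S := sub_le_sub_right (hmono subset_union_right) _
    _ = f (S ∪ T \ S) - f S := by rw [union_sdiff_self_eq_union]
    _ ≤ ∑ a ∈ T \ S, (f (insert a S) - f S) := hf.union_sub_le_sum disjoint_sdiff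

theorem sub_le_nsmul_of_card_sdiff_le (hf : IsSubmodular f) (hmono : Monotone f) {S T : Finset α}
    {k : ℕ} (hT : #(T \ S) ≤ k) {M : R} (hM₀ : 0 ≤ M)
    (hM : ∀ a ∈ T \ S, f (insert a S) - f S ≤ M) :
    f T - f S ≤ k • M :=
  calc
    f T - f S ≤ ∑ a ∈ T \ S, (f (insert a S) - f S) := hf.sub_le_sum_sdiff hmono S T
    _ ≤ #(T \ S) • M := sum_le_card_nsmul _ _ _ hM
    _ ≤ k • M := nsmul_le_nsmul_left hM₀ hT

end IsSubmodular

end Submodular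

theorem le_add_two_mul_of_isMaxOn_of_abs_sub_le {α R : Type*} [CommRing R] [LinearOrder R]
    [IsStrictOrderedRing R] {s : Set α} {g x : α → R} {ε : R} {a₁ : α}
    (hx : ∀ a ∈ s, |x a - g a| ≤ ε) (ha₁ : a₁ ∈ s) (hmax : IsMaxOn x s a₁) {a : α} (ha : a ∈ s) :
    g a ≤ g a₁ + 2 * ε := by
  have hlower : g a - ε ≤ x a := sub_le_of_abs_sub_le_left (hx a ha)
  have hupper : x a₁ - g a₁ ≤ ε := (abs_le.mp (hx a₁ ha₁)).2
  linarith [isMaxOn_iff.mp hmax a ha]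

theorem greedy_step_robust_general {α R : Type*} [DecidableEq α] [Field R] [LinearOrder R]
    [IsStrictOrderedRing R] {f : Finset α → R} (hf : IsSubmodular f) (hmono : Monotone f)
    {k : ℕ} (hk : 1 ≤ k) {S T : Finset α} (hT : #(T \ S) ≤ k) {ε : R} {x : α → R}
    (hx : ∀ a ∉ S, |x a - f (insert a S)| ≤ ε) {a₁ : α} (ha₁ : a₁ ∉ S)
    (hmax : ∀ a ∉ S, x a ≤ x a₁) :
    f (insert a₁ S) - f S ≥ (1 / (k : R)) * (f T - f S) - 2 * ε := by
  have hε : 0 ≤ ε := (abs_nonneg _).trans (hx a₁ ha₁)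
  have hgain_nonneg : 0 ≤ f (insert a₁ S) - f S := sub_nonneg.mpr (hmono (subset_insert a₁ S))
  have hgain : ∀ a ∉ S, f (insert a S) - f S ≤ f (insert a₁ S) - f S + 2 * ε := fun a ha ↦ by
    have hle : f (insert a S) ≤ f (insert a₁ S) + 2 * ε :=
      le_add_two_mul_of_isMaxOn_of_abs_sub_le (s := {b | b ∉ S}) (g := fun b ↦ f (insert b S))
        hx ha₁ hmax ha
    linarith
  have hsum : f T - f S ≤ k * (f (insert a₁ S) - f S + 2 * ε) := by
    simpa only [nsmul_eq_mul] using
      hf.sub_le_nsmul_of_card_sdiff_le hmono hT (by positivity) fun a ha ↦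
        hgain a (mem_sdiff.mp ha).2
  have hk_pos : (0 : R) < k := Nat.cast_pos.mpr hk
  rw [ge_iff_le, sub_le_iff_le_add, one_div, inv_mul_le_iff₀ hk_pos]
  exact hsum

/-- The per-phase greedy step with an `ε`-accurate oracle: if `a₁` maximizes the
approximate marginal values `x̄` over `Ω \ S`, then
`f(S ∪ {a₁}) − f(S) ≥ (1/k)(f(S*) − f(S)) − 2ε`. -/
theorem greedy_step_robust {Ω : Type*} [Fintype Ω] [DecidableEq Ω]
    (f : Finset Ω → ℝ)
    (hsub : ∀ A B : Finset Ω, A ⊆ B → ∀ x : Ω, x ∉ B →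
      f (insert x B) - f B ≤ f (insert x A) - f A)
    (hmono : ∀ C D : Finset Ω, C ⊆ D → f C ≤ f D)
    (k : ℕ) (hk : 1 ≤ k)
    (Sstar : Finset Ω) (hSstar : Sstar.card ≤ k)
    (S : Finset Ω) (hS : S ≠ Finset.univ)
    (ε : ℝ) (hε : 0 ≤ ε)
    (xbar : Ω → ℝ) (hxbar : ∀ a : Ω, a ∉ S → |xbar a - f (insert a S)| ≤ ε)
    (a₁ : Ω) (ha₁ : a₁ ∉ S) (hmax : ∀ a : Ω, a ∉ S → xbar a ≤ xbar a₁) :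
    f (insert a₁ S) - f S ≥ (1 / (k : ℝ)) * (f Sstar - f S) - 2 * ε :=
  greedy_step_robust_general hsub hmono hk ((card_le_card sdiff_subset).trans hSstar)
    hxbar ha₁ hmax
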